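/- Let q = r^2 with r an odd prime power. Suppose q − 1 = e_1 f_1 = e_2 f_2, there exists an integer l ≥ 2 with e_1 ≡ 2^l (mod 2^{l+1}) and 2^l | e_2, and that 2e_2 | e_1(r−1) and e_1 | e_2(r+1). Let s, t be integers with 1 ≤ s ≤ D_1, 1 ≤ t ≤ D_2 and 4 | (s−1)(r+1), and set n_1 = s·f_1 + t·f_2. If n_1 is odd (so n_1 + 1 is even), then for every integer k with 1 ≤ k ≤ (n_1+1)/2 − 1 there exists an [n_1+1, k] MDS self-orthogonal code over F_q, i.e., a linear code C ⊆ F_q^{n_1+1} with dim C = k, C ⊆ C⊥, and minimum Hamming distance (n_1+1) − k + 1. -/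

import Mathlib

/-- The Euclidean dual of a linear code `C ⊆ F^n`. -/
def dualCode {F : Type*} [Field F] {n : ℕ} (C : Submodule F (Fin n → F)) :
    Submodule F (Fin n → F) where
  carrier := {x | ∀ c ∈ C, ∑ i, x i * c i = 0}
  add_mem' := by
    intro a b ha hb c hc
    simp only [Set.mem_setOf_eq] at ha hb ⊢
    simp [Pi.add_apply, add_mul, Finset.sum_add_distrib, ha c hc, hb c hc]
  zero_mem' := by intro c hc; simp
  smul_mem' := by
    intro r a ha c hc
    simp only [Set.mem_setOf_eq] at ha ⊢
    simp [Pi.smul_apply, smul_eq_mul, mul_assoc, ← Finset.mul_sum, ha c hc]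

/-- `C` has minimum Hamming distance `d`. -/
def IsMinDist {F : Type*} [Field F] [DecidableEq F] {n : ℕ}
    (C : Submodule F (Fin n → F)) (d : ℕ) : Prop :=
  (∀ c ∈ C, c ≠ 0 → d ≤ hammingNorm c) ∧ ∃ c ∈ C, c ≠ 0 ∧ hammingNorm c = d

/-!
If the monic polynomial `Q` has `n` distinct roots in `F`, all of them in `F`, then the weights
`1 / Q'(a)` annihilate the values at the roots of every polynomial of degree less than `n - 1`. When
they are squares `v(a) ^ 2`, the generalized Reed–Solomon codes with column multipliers `v` and
dimension `k ≤ n / 2` are self-orthogonal.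

Write `r = 2 * m + 1`, so that `(q - 1) / 2 = 2 * m * (m + 1)`, and `M = f₁ * D₁ = f₂ * D₂`. Choose
`s` solutions `S` of `c ^ D₁ = 1` and `t` solutions `T` of `c ^ D₂ = -1`, and let the roots of `Q`
be `0` and the `a` with `a ^ f₁ ∈ S` or `a ^ f₂ ∈ T`. Then `a ^ M = 1` in the first case and
`a ^ M = -1` in the second. The product rule splits `Q'(a)` into factors that are squares for one
of three reasons: `x ^ (2 * M) = 1` and `2 * M ∣ (q - 1) / 2`; or `x` lies in the subfield of order
`r`, whose elements are all squares; or `x` is a product of differences of `(r + 1)`-th roots of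
unity, whose quadratic character is computed with the Frobenius map `x ↦ x ^ r`.
-/

section GRS

open Polynomial Finset Lagrange

variable {F ι : Type*} [Field F]

/-- The weighted evaluation map `p ↦ (vᵢ p(xᵢ))ᵢ`, the encoder of generalized Reed–Solomon codes;
`v` are the column multipliers and `x` the evaluation points. -/
noncomputable def weightedEval (v x : ι → F) : F[X] →ₗ[F] ι → F :=
  LinearMap.pi fun i => v i • leval (x i)

@[simp]
lemma weightedEval_apply (v x : ι → F) (p : F[X]) (i : ι) :
    weightedEval v x p i = v i * p.eval (x i) := rfl

/-- The generalized Reed–Solomon code with column multipliers `v` and evaluation points `x`: the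
weighted evaluations of the polynomials of degree less than `k`. -/
noncomputable def grsCode (v x : ι → F) (k : ℕ) : Submodule F (ι → F) :=
  (degreeLT F k).map (weightedEval v x)

variable [Fintype ι] {v x : ι → F}

lemma finrank_grsCode (hv : ∀ i, v i ≠ 0) (hx : Function.Injective x) {k : ℕ}
    (hk : k ≤ Fintype.card ι) : Module.finrank F (grsCode v x k) = k := by
  have injective_encoder : Function.Injective ((weightedEval v x).domRestrict (degreeLT F k)) := by
    rw [← LinearMap.ker_eq_bot, LinearMap.ker_eq_bot']
    rintro ⟨p, hp⟩ hp_zero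
    refine Subtype.ext (eq_zero_of_degree_lt_of_eval_index_eq_zero univ hx.injOn
      ((mem_degreeLT.1 hp).trans_le (by exact_mod_cast hk)) fun i _ => ?_)
    exact (mul_eq_zero.1 (congrFun hp_zero i)).resolve_left (hv i)
  rw [grsCode, ← LinearMap.range_domRestrict, LinearMap.finrank_range_of_inj injective_encoder,
    (degreeLTEquiv F k).finrank_eq, Module.finrank_fin_fun]

lemma card_le_hammingNorm_weightedEval_add_natDegree [DecidableEq F] (hv : ∀ i, v i ≠ 0)
    (hx : Function.Injective x) {p : F[X]} (hp : p ≠ 0) :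
    Fintype.card ι ≤ hammingNorm (weightedEval v x p) + p.natDegree := by
  classical
  have card_zeros_le : #{i | weightedEval v x p i = 0} ≤ p.natDegree := by
    rw [← card_image_of_injective _ hx]
    refine card_le_degree_of_subset_roots fun a ha => ?_
    obtain ⟨i, hi, rfl⟩ := mem_image.1 (mem_def.2 ha)
    exact (mem_roots hp).2 ((mul_eq_zero.1 (mem_filter.1 hi).2).resolve_left (hv i))
  have card_zeros_add := card_filter_add_card_filter_not (s := (univ : Finset ι))
    (fun i => weightedEval v x p i = 0)
  rw [card_univ] at card_zeros_add
  rw [hammingNorm]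
  lia

lemma hammingNorm_weightedEval_nodal [DecidableEq F] (hv : ∀ i, v i ≠ 0)
    (hx : Function.Injective x) (S : Finset ι) :
    hammingNorm (weightedEval v x (nodal S x)) = Fintype.card ι - #S := by
  classical
  rw [hammingNorm, ← card_compl]
  congr 1
  ext i
  simp [eval_nodal, prod_eq_zero_iff, sub_eq_zero, hv i, hx.eq_iff]

lemma isMinDist_grsCode [DecidableEq F] {n k : ℕ} {v x : Fin n → F} (hv : ∀ i, v i ≠ 0)
    (hx : Function.Injective x) (hk : 1 ≤ k) (hkn : k ≤ n) :
    IsMinDist (grsCode v x k) (n - k + 1) := by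
  refine ⟨?_, ?_⟩
  · rintro _ ⟨p, hp, rfl⟩ hc
    have hp0 : p ≠ 0 := by
      rintro rfl
      exact hc (map_zero _)
    have natDegree_lt := (natDegree_lt_iff_degree_lt hp0).2 (mem_degreeLT.1 hp)
    have weight_bound := card_le_hammingNorm_weightedEval_add_natDegree hv hx hp0
    rw [Fintype.card_fin] at weight_bound
    lia
  · obtain ⟨S, -, hS⟩ := exists_subset_card_eq (s := (univ : Finset (Fin n))) (n := k - 1)
      (by rw [card_fin]; lia)
    have weight_eq : hammingNorm (weightedEval v x (nodal S x)) = n - k + 1 := by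
      rw [hammingNorm_weightedEval_nodal hv hx, Fintype.card_fin, hS]
      lia
    refine ⟨_, ⟨nodal S x, mem_degreeLT.2 ?_, rfl⟩, ?_, weight_eq⟩
    · rw [degree_nodal, hS]
      exact_mod_cast Nat.sub_lt hk one_pos
    · rw [← hammingNorm_ne_zero_iff, weight_eq]
      exact Nat.succ_ne_zero _

lemma degree_mul_lt_of_mem_degreeLT {k : ℕ} {p q : F[X]} (hp : p ∈ degreeLT F k)
    (hq : q ∈ degreeLT F k) : (p * q).degree < (2 * k - 1 : ℕ) := by
  rw [mem_degreeLT] at hp hq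
  by_cases hpq : p * q = 0
  · rw [hpq, degree_zero]
    exact WithBot.bot_lt_coe _
  · have hp0 := left_ne_zero_of_mul hpq
    have hq0 := right_ne_zero_of_mul hpq
    rw [← natDegree_lt_iff_degree_lt hp0] at hp
    rw [← natDegree_lt_iff_degree_lt hq0] at hq
    rw [← natDegree_lt_iff_degree_lt hpq, natDegree_mul hp0 hq0]
    lia

-- The sum is the coefficient of degree `|ι| - 1` of `p` in Lagrange's interpolation formula.
lemma sum_nodalWeight_mul_eval_eq_zero [DecidableEq ι] (hx : Function.Injective x) {p : F[X]}
    (hp : p.degree < (Fintype.card ι - 1 : ℕ)) :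
    ∑ i, nodalWeight univ x i * p.eval (x i) = 0 := by
  have degree_lt : p.degree < #(univ : Finset ι) :=
    hp.trans_le (by rw [card_univ]; exact_mod_cast Nat.sub_le _ _)
  have coeff_eq := coeff_eq_sum hx.injOn degree_lt
  rw [card_univ, coeff_eq_zero_of_degree_lt hp] at coeff_eq
  rw [coeff_eq]
  refine sum_congr rfl fun i _ => ?_
  rw [nodalWeight, prod_inv_distrib, div_eq_inv_mul]

lemma grsCode_le_dualCode {n k : ℕ} {v x : Fin n → F} (hx : Function.Injective x)
    (hv : ∀ i, nodalWeight univ x i = v i * v i) (hkn : 2 * k ≤ n) :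
    grsCode v x k ≤ dualCode (grsCode v x k) := by
  rintro _ ⟨p, hp, rfl⟩ _ ⟨q, hq, rfl⟩
  have degree_lt : (p * q).degree < (Fintype.card (Fin n) - 1 : ℕ) :=
    (degree_mul_lt_of_mem_degreeLT hp hq).trans_le (by rw [Fintype.card_fin]; gcongr)
  rw [← sum_nodalWeight_mul_eval_eq_zero hx degree_lt]
  refine sum_congr rfl fun i _ => ?_
  rw [weightedEval_apply, weightedEval_apply, hv, eval_mul]
  ring

/-- There is an `[n, k]` MDS self-orthogonal code over `F`. -/
def HasMDSSelfOrthogonalCode (F : Type*) [Field F] [DecidableEq F] (n k : ℕ) : Prop :=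
  ∃ C : Submodule F (Fin n → F),
    Module.finrank F C = k ∧ C ≤ dualCode C ∧ IsMinDist C (n - k + 1)

lemma hasMDSSelfOrthogonalCode_of_isSquare_nodalWeight [DecidableEq F] {n k : ℕ} {x : Fin n → F}
    (hx : Function.Injective x) (hsq : ∀ i, IsSquare (nodalWeight univ x i)) (hk : 1 ≤ k)
    (hkn : 2 * k ≤ n) : HasMDSSelfOrthogonalCode F n k := by
  choose v hv using hsq
  have hv0 : ∀ i, v i ≠ 0 := fun i =>
    left_ne_zero_of_mul (hv i ▸ nodalWeight_ne_zero hx.injOn (mem_univ i))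
  exact ⟨grsCode v x k, finrank_grsCode hv0 hx (by rw [Fintype.card_fin]; lia),
    grsCode_le_dualCode hx hv hkn, isMinDist_grsCode hv0 hx hk (by lia)⟩

lemma exists_injective_nodal_eq {n : ℕ} {Q : F[X]} (hQ : Q.Monic) (hsplits : Q.Splits)
    (hnodup : Q.roots.Nodup) (hdeg : Q.natDegree = n) :
    ∃ x : Fin n → F, Function.Injective x ∧ nodal univ x = Q := by
  classical
  have card_roots : #Q.roots.toFinset = n := by
    rw [Multiset.toFinset_card_of_nodup hnodup, ← hsplits.natDegree_eq_card_roots, hdeg]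
  let e := Q.roots.toFinset.equivFinOfCardEq card_roots
  refine ⟨fun i => e.symm i, Subtype.val_injective.comp e.symm.injective, ?_⟩
  calc nodal univ (fun i => (e.symm i : F))
      = ∏ a : Q.roots.toFinset, (X - C (a : F)) := e.symm.prod_comp fun a => X - C (a : F)
    _ = ∏ a ∈ Q.roots.toFinset, (X - C a) := prod_coe_sort _ fun a => X - C a
    _ = (Q.roots.map fun a => X - C a).prod := by
        rw [Finset.prod, Multiset.toFinset_val, hnodup.dedup]
    _ = Q := (hsplits.eq_prod_roots_of_monic hQ).symm

/-- The condition on a locator polynomial under which the generalized Reed–Solomon codes supported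
on its roots have a self-orthogonal choice of column multipliers. -/
def IsSquareDerivativeOnRoots (Q : F[X]) : Prop :=
  ∀ a, Q.eval a = 0 → IsSquare ((derivative Q).eval a)

lemma IsSquareDerivativeOnRoots.mul {P R : F[X]} (hP : IsSquareDerivativeOnRoots P)
    (hR : IsSquareDerivativeOnRoots R) (hRP : ∀ a, P.eval a = 0 → IsSquare (R.eval a))
    (hPR : ∀ a, R.eval a = 0 → IsSquare (P.eval a)) : IsSquareDerivativeOnRoots (P * R) := by
  intro a ha
  rw [derivative_mul, eval_add, eval_mul, eval_mul]
  rcases mul_eq_zero.1 ((eval_mul).symm.trans ha) with ha | ha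
  · rw [ha, zero_mul, add_zero]
    exact (hP a ha).mul (hRP a ha)
  · rw [ha, mul_zero, zero_add]
    exact (hPR a ha).mul (hR a ha)

lemma isSquareDerivativeOnRoots_X : IsSquareDerivativeOnRoots (X : F[X]) := by
  intro a _
  rw [derivative_X, eval_one]
  exact IsSquare.one

lemma IsSquareDerivativeOnRoots.hasMDSSelfOrthogonalCode [DecidableEq F] {n k : ℕ} {Q : F[X]}
    (hsq : IsSquareDerivativeOnRoots Q) (hQ : Q.Monic) (hsplits : Q.Splits)
    (hnodup : Q.roots.Nodup) (hdeg : Q.natDegree = n) (hk : 1 ≤ k) (hkn : 2 * k ≤ n) :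
    HasMDSSelfOrthogonalCode F n k := by
  obtain ⟨x, hx, rfl⟩ := exists_injective_nodal_eq hQ hsplits hnodup hdeg
  refine hasMDSSelfOrthogonalCode_of_isSquare_nodalWeight hx (fun i => ?_) hk hkn
  rw [nodalWeight_eq_eval_derivative_nodal (mem_univ i)]
  exact (hsq _ (eval_nodal_at_node (mem_univ i))).inv

end GRS

section CosetPolynomial

open Polynomial Finset

variable {F : Type*} [Field F] {f : ℕ} {S : Finset F}

/-- The monic polynomial whose roots are the `a` with `a ^ f ∈ S`. When the elements of `S` are
nonzero `f`-th powers and `F` contains the `f`-th roots of unity, these roots form `#S` cosets of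
the group of `f`-th roots of unity, the evaluation sets of the construction. -/
noncomputable def cosetPoly (f : ℕ) (S : Finset F) : F[X] :=
  ∏ c ∈ S, (X ^ f - C c)

lemma cosetPoly_monic (hf : f ≠ 0) (S : Finset F) : (cosetPoly f S).Monic :=
  monic_prod_of_monic _ _ fun c _ => monic_X_pow_sub_C c hf

lemma natDegree_cosetPoly (hf : f ≠ 0) (S : Finset F) : (cosetPoly f S).natDegree = #S * f := by
  rw [cosetPoly, natDegree_prod_of_monic _ _ fun c _ => monic_X_pow_sub_C c hf]
  simp only [natDegree_X_pow_sub_C, sum_const, smul_eq_mul]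

lemma eval_cosetPoly (a : F) : (cosetPoly f S).eval a = ∏ c ∈ S, (a ^ f - c) := by
  simp only [cosetPoly, eval_prod, eval_sub, eval_pow, eval_X, eval_C]

lemma eval_cosetPoly_eq_zero_iff {a : F} : (cosetPoly f S).eval a = 0 ↔ a ^ f ∈ S := by
  rw [eval_cosetPoly, prod_eq_zero_iff]
  simp only [sub_eq_zero, exists_eq_right']

lemma cosetPoly_dvd {D : ℕ} {v : F} (hS : ∀ c ∈ S, c ^ D = v) :
    cosetPoly f S ∣ X ^ (f * D) - C v := by
  refine prod_dvd_of_coprime (fun c _ d _ hcd => ?_) fun c hc => ?_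
  · have coprime := (pairwise_coprime_X_sub_C Function.injective_id hcd).map (expand F f).toRingHom
    simpa using coprime
  · rw [← hS c hc, C_pow, pow_mul]
    exact sub_dvd_pow_sub_pow _ _ _

lemma eval_derivative_cosetPoly [DecidableEq F] {a : F} (ha : a ^ f ∈ S) :
    (derivative (cosetPoly f S)).eval a = f * a ^ (f - 1) * ∏ d ∈ S.erase (a ^ f), (a ^ f - d) := by
  rw [cosetPoly, ← mul_prod_erase _ _ ha, derivative_mul, derivative_sub, derivative_X_pow,
    derivative_C]
  simp [eval_prod]

lemma isSquareDerivativeOnRoots_cosetPoly [DecidableEq F] (hf : IsSquare (f : F))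
    (hroot : ∀ a, a ^ f ∈ S → IsSquare a)
    (hS : ∀ c ∈ S, IsSquare (∏ d ∈ S.erase c, (c - d))) :
    IsSquareDerivativeOnRoots (cosetPoly f S) := by
  intro a ha
  rw [eval_cosetPoly_eq_zero_iff] at ha
  rw [eval_derivative_cosetPoly ha]
  exact (hf.mul ((hroot a ha).pow _)).mul (hS _ ha)

lemma isSquare_eval_cosetPoly {a : F} (ha : ∀ c ∈ S, IsSquare (a ^ f - c)) :
    IsSquare ((cosetPoly f S).eval a) := by
  rw [eval_cosetPoly]
  exact isSquare_prod _ ha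

end CosetPolynomial

section FiniteField

open Polynomial Finset

variable {F : Type*} [Field F] [Fintype F]

lemma splits_X_pow_card_sub_X : (X ^ Fintype.card F - X : F[X]).Splits := by
  rw [splits_iff_card_roots, FiniteField.roots_X_pow_card_sub_X,
    FiniteField.X_pow_card_sub_X_natDegree_eq F Fintype.one_lt_card, card_val, card_univ]

lemma splits_and_nodup_roots_of_dvd {Q : F[X]} (hQ : Q ∣ X ^ Fintype.card F - X) :
    Q.Splits ∧ Q.roots.Nodup := by
  have hne := FiniteField.X_pow_card_sub_X_ne_zero F (Fintype.one_lt_card (α := F))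
  refine ⟨splits_X_pow_card_sub_X.of_dvd hne hQ,
    Multiset.nodup_of_le (roots.le_of_dvd hne hQ) ?_⟩
  rw [FiniteField.roots_X_pow_card_sub_X]
  exact univ.nodup

lemma X_mul_X_pow_sub_one_dvd {d : ℕ} (hd : d ∣ Fintype.card F - 1) :
    (X * (X ^ d - 1) : F[X]) ∣ X ^ Fintype.card F - X := by
  have factor : (X ^ Fintype.card F - X : F[X]) = X * (X ^ (Fintype.card F - 1) - 1) := by
    rw [mul_sub, mul_one, mul_pow_sub_one Fintype.card_ne_zero]
  rw [factor]
  obtain ⟨e, he⟩ := hd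
  rw [he, pow_mul]
  exact mul_dvd_mul_left _ (by simpa using sub_dvd_pow_sub_pow (X ^ d : F[X]) 1 e)

lemma exists_finset_card_eq_forall_pow_eq {D e s : ℕ} {v : F} (hDe : D * e ∣ Fintype.card F - 1)
    (hv : v ^ e = 1) (hs : s ≤ D) : ∃ S : Finset F, #S = s ∧ ∀ c ∈ S, c ^ D = v := by
  classical
  have hdvd : (X ^ D - C v : F[X]) ∣ X ^ (D * e) - 1 := by
    rw [pow_mul, ← C_1, ← hv, C_pow]
    exact sub_dvd_pow_sub_pow _ _ _
  obtain ⟨hsplits, hnodup⟩ := splits_and_nodup_roots_of_dvd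
    ((hdvd.trans (dvd_mul_left _ X)).trans (X_mul_X_pow_sub_one_dvd hDe))
  obtain ⟨S, hS, hcard⟩ := exists_subset_card_eq (s := (X ^ D - C v).roots.toFinset) (n := s) (by
    rwa [Multiset.toFinset_card_of_nodup hnodup, ← hsplits.natDegree_eq_card_roots,
      natDegree_X_pow_sub_C])
  refine ⟨S, hcard, fun c hc => ?_⟩
  have hroot := isRoot_of_mem_roots (Multiset.mem_toFinset.1 (hS hc))
  simpa [sub_eq_zero] using hroot

end FiniteField

section SquareOrder

open Finset

variable {F : Type*} [Field F] [Fintype F] {r m : ℕ}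

lemma exists_ringHom_eq_pow (hF : Fintype.card F = r ^ 2) : ∃ σ : F →+* F, ∀ a, σ a = a ^ r := by
  obtain ⟨p, _, n, hp, hcard⟩ := FiniteField.card' F
  have : Fact p.Prime := ⟨hp⟩
  obtain ⟨j, -, rfl⟩ := (Nat.dvd_prime_pow hp).1 (hcard ▸ hF ▸ dvd_pow_self r two_ne_zero)
  exact ⟨iterateFrobenius F p j, iterateFrobenius_def p j⟩

lemma isSquare_of_pow_eq_one (hF : Fintype.card F = (2 * m + 1) ^ 2) {a : F}
    (ha : a ^ (2 * m * (m + 1)) = 1) : IsSquare a := by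
  have card_eq : Fintype.card F = 2 * (2 * m * (m + 1)) + 1 := by rw [hF]; ring
  rcases eq_or_ne a 0 with rfl | ha0
  · exact IsSquare.zero
  have char_ne_two : ringChar F ≠ 2 := by
    rw [Ne, FiniteField.even_card_iff_char_two]
    lia
  rw [FiniteField.isSquare_iff char_ne_two ha0, card_eq]
  convert ha using 2
  lia

lemma isSquare_of_pow_eq_self (hF : Fintype.card F = (2 * m + 1) ^ 2) {a : F}
    (ha : a ^ (2 * m + 1) = a) : IsSquare a := by
  rcases eq_or_ne a 0 with rfl | ha0
  · exact IsSquare.zero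
  have pow_eq_one : a ^ (2 * m) = 1 := mul_right_cancel₀ ha0 (by rw [← pow_succ, ha, one_mul])
  exact isSquare_of_pow_eq_one hF (by rw [pow_mul, pow_eq_one, one_pow])

lemma isSquare_sub_of_pow_eq_self (hF : Fintype.card F = (2 * m + 1) ^ 2) {a b : F}
    (ha : a ^ (2 * m + 1) = a) (hb : b ^ (2 * m + 1) = b) : IsSquare (a - b) := by
  obtain ⟨σ, hσ⟩ := exists_ringHom_eq_pow hF
  exact isSquare_of_pow_eq_self hF (by rw [← hσ, map_sub, hσ, hσ, ha, hb])

lemma isSquare_natCast (hF : Fintype.card F = (2 * m + 1) ^ 2) (n : ℕ) : IsSquare (n : F) := by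
  obtain ⟨σ, hσ⟩ := exists_ringHom_eq_pow hF
  exact isSquare_of_pow_eq_self hF (by rw [← hσ, map_natCast])

lemma isSquare_neg (hF : Fintype.card F = (2 * m + 1) ^ 2) {a : F} (ha : IsSquare a) :
    IsSquare (-a) := by
  rw [← neg_one_mul]
  exact (isSquare_of_pow_eq_self hF (Odd.neg_one_pow ⟨m, rfl⟩)).mul ha

-- With `r = 2 * m + 1`: if `a ^ (r + 1) = b ^ (r + 1) = 1`, then `x ↦ x ^ r` inverts `a` and `b`,
-- so `(a - b) ^ r = a⁻¹ - b⁻¹ = -(a - b) / (a * b)`.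
lemma sub_pow_mul_mul_eq_neg_one (hF : Fintype.card F = (2 * m + 1) ^ 2) {a b : F}
    (ha : a ^ (2 * m + 2) = 1) (hb : b ^ (2 * m + 2) = 1) (hab : a ≠ b) :
    (a - b) ^ (2 * m) * (a * b) = -1 := by
  obtain ⟨σ, hσ⟩ := exists_ringHom_eq_pow hF
  have sub_pow_r : (a - b) ^ (2 * m + 1) = a ^ (2 * m + 1) - b ^ (2 * m + 1) := by
    rw [← hσ, map_sub, hσ, hσ]
  refine mul_right_cancel₀ (sub_ne_zero.2 hab) ?_
  linear_combination (a * b) * sub_pow_r + b * ha - a * hb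

lemma sub_pow_mul_pow_mul_pow_eq (hF : Fintype.card F = (2 * m + 1) ^ 2) {a b : F}
    (ha : a ^ (2 * m + 2) = 1) (hb : b ^ (m + 1) = 1) (hab : a ≠ b) :
    (a - b) ^ (2 * m * (m + 1)) * a ^ (m + 1) = (-1) ^ (m + 1) := by
  have hb' : b ^ (2 * m + 2) = 1 := by rw [← mul_add_one, mul_comm, pow_mul, hb, one_pow]
  rw [← sub_pow_mul_mul_eq_neg_one hF ha hb' hab, mul_pow, mul_pow, hb, mul_one, ← pow_mul]

lemma isSquare_sub_of_pow_eq_neg_one_pow (hF : Fintype.card F = (2 * m + 1) ^ 2) {a b : F}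
    (ha : a ^ (m + 1) = (-1) ^ (m + 1)) (hb : b ^ (m + 1) = 1) : IsSquare (a - b) := by
  rcases eq_or_ne a b with rfl | hab
  · rw [sub_self]
    exact IsSquare.zero
  have ha' : a ^ (2 * m + 2) = 1 := by
    rw [← mul_add_one, mul_comm, pow_mul, ha, ← pow_mul]
    exact (even_two.mul_left _).neg_one_pow
  have pow_eq := sub_pow_mul_pow_mul_pow_eq hF ha' hb hab
  rw [ha] at pow_eq
  exact isSquare_of_pow_eq_one hF
    (mul_right_cancel₀ (pow_ne_zero _ (neg_ne_zero.2 one_ne_zero)) (pow_eq.trans (one_mul _).symm))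

lemma isSquare_prod_erase_sub [DecidableEq F] (hF : Fintype.card F = (2 * m + 1) ^ 2)
    {S : Finset F} (hS : ∀ c ∈ S, c ^ (m + 1) = 1) (heven : Even ((#S - 1) * (m + 1))) {c : F}
    (hc : c ∈ S) : IsSquare (∏ d ∈ S.erase c, (c - d)) := by
  have hc' : c ^ (2 * m + 2) = 1 := by rw [← mul_add_one, mul_comm, pow_mul, hS c hc, one_pow]
  have factor_pow : ∀ d ∈ S.erase c, (c - d) ^ (2 * m * (m + 1)) = (-1) ^ (m + 1) := by
    intro d hd
    obtain ⟨hdc, hdS⟩ := mem_erase.1 hd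
    simpa only [hS c hc, mul_one] using sub_pow_mul_pow_mul_pow_eq hF hc' (hS d hdS) hdc.symm
  refine isSquare_of_pow_eq_one hF ?_
  rw [← prod_pow, prod_congr rfl factor_pow, prod_const, card_erase_of_mem hc, ← pow_mul, mul_comm]
  exact heven.neg_one_pow

end SquareOrder

section CosetConstruction

open Polynomial Finset

variable {F : Type*} [Field F] {m M D₁ D₂ f₁ f₂ : ℕ} {S T : Finset F}

lemma X_mul_cosetPoly_mul_cosetPoly_dvd (hS : ∀ c ∈ S, c ^ D₁ = 1) (hT : ∀ c ∈ T, c ^ D₂ = -1)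
    (hfD : f₁ * D₁ = f₂ * D₂) :
    X * cosetPoly f₁ S * cosetPoly f₂ T ∣ (X * (X ^ (2 * (f₁ * D₁)) - 1) : F[X]) := by
  have factor : (X * (X ^ (2 * (f₁ * D₁)) - 1) : F[X]) =
      X * (X ^ (f₁ * D₁) - C 1) * (X ^ (f₂ * D₂) - C (-1)) := by
    rw [← hfD, C_neg, C_1, two_mul, pow_add]
    ring
  rw [factor]
  exact mul_dvd_mul (mul_dvd_mul_left _ (cosetPoly_dvd hS)) (cosetPoly_dvd hT)

lemma natDegree_X_mul_cosetPoly_mul_cosetPoly (hf₁ : f₁ ≠ 0) (hf₂ : f₂ ≠ 0) :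
    (X * cosetPoly f₁ S * cosetPoly f₂ T).natDegree = #S * f₁ + #T * f₂ + 1 := by
  rw [(monic_X.mul (cosetPoly_monic hf₁ S)).natDegree_mul (cosetPoly_monic hf₂ T),
    monic_X.natDegree_mul (cosetPoly_monic hf₁ S), natDegree_X, natDegree_cosetPoly hf₁,
    natDegree_cosetPoly hf₂]
  ring

lemma pow_eq_self_of_pow_eq_neg_one (hD₂ : D₂ ∣ m) {c : F} (hc : c ^ D₂ = -1) :
    c ^ (2 * m + 1) = c := by
  obtain ⟨d, rfl⟩ := hD₂
  rw [pow_succ, mul_left_comm, pow_mul, hc, pow_mul, neg_one_sq, one_pow, one_mul]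

variable [Fintype F]

lemma isSquare_of_pow_two_mul_eq_one (hF : Fintype.card F = (2 * m + 1) ^ 2)
    (hM : M ∣ m * (m + 1)) {a : F} (ha : a ^ (2 * M) = 1) : IsSquare a := by
  obtain ⟨d, hd⟩ := hM
  refine isSquare_of_pow_eq_one hF ?_
  rw [mul_assoc, hd, ← mul_assoc, pow_mul, ha, one_pow]

lemma isSquareDerivativeOnRoots_cosetPoly_of_pow_eq_one (hF : Fintype.card F = (2 * m + 1) ^ 2)
    (hM : f₁ * D₁ ∣ m * (m + 1)) (hD₁ : D₁ ∣ m + 1) (hS : ∀ c ∈ S, c ^ D₁ = 1)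
    (heven : Even ((#S - 1) * (m + 1))) : IsSquareDerivativeOnRoots (cosetPoly f₁ S) := by
  classical
  obtain ⟨d, hd⟩ := hD₁
  refine isSquareDerivativeOnRoots_cosetPoly (isSquare_natCast hF f₁) (fun a ha => ?_)
    fun c hc => isSquare_prod_erase_sub hF (fun c hc => ?_) heven hc
  · refine isSquare_of_pow_two_mul_eq_one hF hM ?_
    rw [mul_comm, pow_mul, pow_mul, hS _ ha, one_pow]
  · rw [hd, pow_mul, hS c hc, one_pow]

lemma isSquareDerivativeOnRoots_cosetPoly_of_pow_eq_neg_one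
    (hF : Fintype.card F = (2 * m + 1) ^ 2) (hM : f₂ * D₂ ∣ m * (m + 1)) (hD₂ : D₂ ∣ m)
    (hT : ∀ c ∈ T, c ^ D₂ = -1) : IsSquareDerivativeOnRoots (cosetPoly f₂ T) := by
  classical
  have pow_r_eq_self : ∀ c ∈ T, c ^ (2 * m + 1) = c := fun c hc =>
    pow_eq_self_of_pow_eq_neg_one hD₂ (hT c hc)
  refine isSquareDerivativeOnRoots_cosetPoly (isSquare_natCast hF f₂) (fun a ha => ?_)
    fun c hc => isSquare_prod _ fun d hd =>
      isSquare_sub_of_pow_eq_self hF (pow_r_eq_self c hc) (pow_r_eq_self d (mem_of_mem_erase hd))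
  refine isSquare_of_pow_two_mul_eq_one hF hM ?_
  rw [mul_comm, pow_mul, pow_mul, hT _ ha, neg_one_sq]

lemma isSquare_eval_zero_cosetPoly (hF : Fintype.card F = (2 * m + 1) ^ 2) (hf₁ : f₁ ≠ 0)
    (hS : ∀ c ∈ S, IsSquare c) : IsSquare ((cosetPoly f₁ S).eval 0) := by
  refine isSquare_eval_cosetPoly fun c hc => ?_
  rw [zero_pow hf₁, zero_sub]
  exact isSquare_neg hF (hS c hc)

lemma isSquare_eval_cosetPoly_of_pow_eq_one (hF : Fintype.card F = (2 * m + 1) ^ 2)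
    (hD₂ : D₂ ∣ m) (hT : ∀ c ∈ T, c ^ D₂ = -1) {a : F} (ha : a ^ (f₂ * D₂) = 1) :
    IsSquare ((cosetPoly f₂ T).eval a) := by
  have pow_r_eq_self : (a ^ f₂) ^ (2 * m + 1) = a ^ f₂ := by
    obtain ⟨d, rfl⟩ := hD₂
    rw [pow_succ, mul_left_comm, pow_mul, ← pow_mul a, ha, one_pow, one_mul]
  exact isSquare_eval_cosetPoly fun c hc =>
    isSquare_sub_of_pow_eq_self hF pow_r_eq_self (pow_eq_self_of_pow_eq_neg_one hD₂ (hT c hc))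

lemma isSquare_eval_cosetPoly_of_pow_eq_neg_one (hF : Fintype.card F = (2 * m + 1) ^ 2)
    (hD₁_odd : Odd D₁) (hD₁ : D₁ ∣ m + 1) (hS : ∀ c ∈ S, c ^ D₁ = 1) {a : F}
    (ha : a ^ (f₁ * D₁) = -1) : IsSquare ((cosetPoly f₁ S).eval a) := by
  obtain ⟨d, hd⟩ := hD₁
  have pow_eq_neg_one_pow : (a ^ f₁) ^ (m + 1) = (-1) ^ (m + 1) := by
    rw [hd, pow_mul, ← pow_mul a, ha, pow_mul, hD₁_odd.neg_one_pow]
  refine isSquare_eval_cosetPoly fun c hc =>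
    isSquare_sub_of_pow_eq_neg_one_pow hF pow_eq_neg_one_pow ?_
  rw [hd, pow_mul, hS c hc, one_pow]

lemma isSquareDerivativeOnRoots_X_mul_cosetPoly_mul_cosetPoly
    (hF : Fintype.card F = (2 * m + 1) ^ 2) (hD₁_odd : Odd D₁) (hD₁ : D₁ ∣ m + 1) (hD₂ : D₂ ∣ m)
    (hfD : f₁ * D₁ = f₂ * D₂) (hM : f₁ * D₁ ∣ m * (m + 1)) (hf₁ : f₁ ≠ 0) (hf₂ : f₂ ≠ 0)
    (hS : ∀ c ∈ S, c ^ D₁ = 1) (hT : ∀ c ∈ T, c ^ D₂ = -1)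
    (heven : Even ((#S - 1) * (m + 1))) :
    IsSquareDerivativeOnRoots (X * cosetPoly f₁ S * cosetPoly f₂ T) := by
  have pow_eq_one : ∀ a, (cosetPoly f₁ S).eval a = 0 → a ^ (f₁ * D₁) = 1 := fun a ha => by
    rw [pow_mul, hS _ (eval_cosetPoly_eq_zero_iff.1 ha)]
  have pow_eq_neg_one : ∀ a, (cosetPoly f₂ T).eval a = 0 → a ^ (f₂ * D₂) = -1 := fun a ha => by
    rw [pow_mul, hT _ (eval_cosetPoly_eq_zero_iff.1 ha)]
  have isSquare_root : ∀ a : F, a ^ (f₁ * D₁) = 1 ∨ a ^ (f₁ * D₁) = -1 → IsSquare a :=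
    fun a ha => isSquare_of_pow_two_mul_eq_one hF hM (by rw [pow_mul', sq_eq_one_iff.2 ha])
  have isSquare_S : ∀ c ∈ S, IsSquare c := fun c hc =>
    isSquare_root c (.inl (by rw [pow_mul', hS c hc, one_pow]))
  have isSquare_T : ∀ c ∈ T, IsSquare c := fun c hc =>
    isSquare_of_pow_eq_self hF (pow_eq_self_of_pow_eq_neg_one hD₂ (hT c hc))
  refine (isSquareDerivativeOnRoots_X.mul
    (isSquareDerivativeOnRoots_cosetPoly_of_pow_eq_one hF hM hD₁ hS heven) ?_ ?_).mul
    (isSquareDerivativeOnRoots_cosetPoly_of_pow_eq_neg_one hF (hfD ▸ hM) hD₂ hT) ?_ ?_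
  · intro a ha
    rw [eval_X] at ha
    exact ha ▸ isSquare_eval_zero_cosetPoly hF hf₁ isSquare_S
  · intro a ha
    rw [eval_X]
    exact isSquare_root a (.inl (pow_eq_one a ha))
  · intro a ha
    rw [eval_mul, mul_eq_zero, eval_X] at ha
    rcases ha with rfl | ha
    · exact isSquare_eval_zero_cosetPoly hF hf₂ isSquare_T
    · exact isSquare_eval_cosetPoly_of_pow_eq_one hF hD₂ hT (hfD ▸ pow_eq_one a ha)
  · intro a ha
    have ha := hfD ▸ pow_eq_neg_one a ha
    rw [eval_mul, eval_X]
    exact (isSquare_root a (.inr ha)).mul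
      (isSquare_eval_cosetPoly_of_pow_eq_neg_one hF hD₁_odd hD₁ hS ha)

theorem hasMDSSelfOrthogonalCode_of_cosets [DecidableEq F] {s t k : ℕ}
    (hF : Fintype.card F = (2 * m + 1) ^ 2) (hD₁_odd : Odd D₁) (hD₁ : D₁ ∣ m + 1) (hD₂ : D₂ ∣ m)
    (hfD : f₁ * D₁ = f₂ * D₂) (hM : f₁ * D₁ ∣ m * (m + 1)) (hs : s ≤ D₁) (ht : t ≤ D₂)
    (heven : Even ((s - 1) * (m + 1))) (hk : 1 ≤ k) (hkn : 2 * k ≤ s * f₁ + t * f₂ + 1) :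
    HasMDSSelfOrthogonalCode F (s * f₁ + t * f₂ + 1) k := by
  have card_sub_one : Fintype.card F - 1 = 4 * (m * (m + 1)) := by
    rw [hF]
    exact Nat.sub_eq_of_eq_add (by ring)
  have hM0 : m * (m + 1) ≠ 0 := by
    have := Fintype.one_lt_card (α := F)
    lia
  have hf₁ : f₁ ≠ 0 := left_ne_zero_of_mul (ne_zero_of_dvd_ne_zero hM0 hM)
  have hf₂ : f₂ ≠ 0 := left_ne_zero_of_mul (ne_zero_of_dvd_ne_zero hM0 (hfD ▸ hM))
  obtain ⟨S, rfl, hS⟩ := exists_finset_card_eq_forall_pow_eq (F := F) (D := D₁) (e := 1) (v := 1)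
    (by rw [card_sub_one, mul_one]; exact (hD₁.mul_left m).mul_left 4) (one_pow 1) hs
  obtain ⟨T, rfl, hT⟩ := exists_finset_card_eq_forall_pow_eq (F := F) (D := D₂) (e := 2) (v := -1)
    (by rw [card_sub_one, mul_comm]; exact mul_dvd_mul (by norm_num) (hD₂.mul_right _))
    neg_one_sq ht
  obtain ⟨hsplits, hnodup⟩ := splits_and_nodup_roots_of_dvd
    ((X_mul_cosetPoly_mul_cosetPoly_dvd hS hT hfD).trans
      (X_mul_X_pow_sub_one_dvd (by rw [card_sub_one]; exact mul_dvd_mul (by norm_num) hM)))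
  exact (isSquareDerivativeOnRoots_X_mul_cosetPoly_mul_cosetPoly hF hD₁_odd hD₁ hD₂ hfD hM hf₁ hf₂
    hS hT heven).hasMDSSelfOrthogonalCode
    ((monic_X.mul (cosetPoly_monic hf₁ S)).mul (cosetPoly_monic hf₂ T)) hsplits hnodup
    (natDegree_X_mul_cosetPoly_mul_cosetPoly hf₁ hf₂) hk hkn

end CosetConstruction

section GcdQuotient

variable {a b c l : ℕ}

lemma two_pow_dvd_of_mod_eq (ha : a % 2 ^ (l + 1) = 2 ^ l) : 2 ^ l ∣ a :=
  (Nat.dvd_mod_iff (pow_dvd_pow 2 l.le_succ)).1 (ha ▸ dvd_rfl)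

lemma odd_div_gcd (ha : a % 2 ^ (l + 1) = 2 ^ l) (hb : 2 ^ l ∣ b) : Odd (a / a.gcd b) := by
  rw [← Nat.not_even_iff_odd, even_iff_two_dvd]
  intro two_dvd
  have pow_dvd : 2 ^ (l + 1) ∣ a := by
    rw [pow_succ, ← Nat.mul_div_cancel' (a.gcd_dvd_left b)]
    exact mul_dvd_mul (Nat.dvd_gcd (two_pow_dvd_of_mod_eq ha) hb) two_dvd
  exact (Nat.two_pow_pos l).ne (Nat.mod_eq_zero_of_dvd pow_dvd ▸ ha)

lemma div_gcd_dvd_of_dvd_mul (hab : 0 < a.gcd b) (h : a ∣ b * c) : a / a.gcd b ∣ c :=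
  (Nat.div_dvd_iff_dvd_mul (a.gcd_dvd_left b) hab).2 (Nat.dvd_gcd_mul_iff_dvd_mul.2 h)

end GcdQuotient

theorem mds_self_orthogonal_odd_length_succ_general
    {r e1 f1 e2 f2 s t l : ℕ} (hr_odd : Odd r)
    (hq1 : r ^ 2 - 1 = e1 * f1) (hq2 : r ^ 2 - 1 = e2 * f2)
    (hl : 2 ≤ l) (he1 : e1 % 2 ^ (l + 1) = 2 ^ l) (he2 : 2 ^ l ∣ e2)
    (hdvd1 : 2 * e2 ∣ e1 * (r - 1)) (hdvd2 : e1 ∣ e2 * (r + 1))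
    (hs2 : s ≤ e1 / Nat.gcd e1 e2) (ht2 : t ≤ e2 / Nat.gcd e1 e2)
    (h4 : 4 ∣ (s - 1) * (r + 1))
    {F : Type*} [Field F] [Fintype F] [DecidableEq F] (hF : Fintype.card F = r ^ 2)
    {k : ℕ} (hk : 1 ≤ k) (hkn : 2 * k ≤ s * f1 + t * f2 + 1) :
    HasMDSSelfOrthogonalCode F (s * f1 + t * f2 + 1) k := by
  obtain ⟨m, rfl⟩ := hr_odd
  have card_sub_one : (2 * m + 1) ^ 2 - 1 = 4 * (m * (m + 1)) := Nat.sub_eq_of_eq_add (by ring)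
  have two_mul_succ : 2 * m + 1 + 1 = 2 * (m + 1) := rfl
  have he1_pos : 0 < e1 := (Nat.two_pow_pos l).trans_le (he1 ▸ Nat.mod_le _ _)
  have gcd_pos : 0 < e1.gcd e2 := Nat.gcd_pos_of_pos_left e2 he1_pos
  have four_dvd_gcd : 4 ∣ e1.gcd e2 :=
    (pow_dvd_pow 2 hl).trans (Nat.dvd_gcd (two_pow_dvd_of_mod_eq he1) he2)
  have hD₁_odd : Odd (e1 / e1.gcd e2) := odd_div_gcd he1 he2
  have hD₁ : e1 / e1.gcd e2 ∣ m + 1 := by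
    rw [two_mul_succ] at hdvd2
    exact hD₁_odd.coprime_two_right.dvd_of_dvd_mul_left (div_gcd_dvd_of_dvd_mul gcd_pos hdvd2)
  have hD₂ : e2 / e1.gcd e2 ∣ m := by
    rw [Nat.add_sub_cancel, mul_left_comm, Nat.mul_dvd_mul_iff_left two_pos] at hdvd1
    rw [Nat.gcd_comm] at gcd_pos ⊢
    exact div_gcd_dvd_of_dvd_mul gcd_pos hdvd1
  have mul_div_gcd₁ : f1 * (e1 / e1.gcd e2) = 4 * (m * (m + 1)) / e1.gcd e2 := by
    rw [← Nat.mul_div_assoc _ (e1.gcd_dvd_left e2), mul_comm, ← hq1, card_sub_one]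
  have mul_div_gcd₂ : f2 * (e2 / e1.gcd e2) = 4 * (m * (m + 1)) / e1.gcd e2 := by
    rw [← Nat.mul_div_assoc _ (e1.gcd_dvd_right e2), mul_comm, ← hq2, card_sub_one]
  have hM : f1 * (e1 / e1.gcd e2) ∣ m * (m + 1) := by
    rw [mul_div_gcd₁, Nat.div_dvd_iff_dvd_mul _ gcd_pos]
    · exact mul_dvd_mul_right four_dvd_gcd _
    · exact card_sub_one ▸ hq1 ▸ (e1.gcd_dvd_left e2).mul_right f1
  have heven : Even ((s - 1) * (m + 1)) := by
    rw [even_iff_two_dvd, ← Nat.mul_dvd_mul_iff_left two_pos, mul_left_comm, ← two_mul_succ]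
    exact h4
  exact hasMDSSelfOrthogonalCode_of_cosets hF hD₁_odd hD₁ hD₂
    (mul_div_gcd₁.trans mul_div_gcd₂.symm) hM hs2 ht2 heven hk hkn

/-- Theorem 5.1(3): if `n₁ = s·f₁ + t·f₂` is odd, then for `1 ≤ k ≤ (n₁+1)/2 − 1` there is a
`q`-ary `[n₁+1, k]` MDS self-orthogonal code, where `q = r²`. -/
theorem mds_self_orthogonal_odd_length_succ
    (r e1 f1 e2 f2 s t l : ℕ)
    (hr_odd : Odd r) (hr_pp : IsPrimePow r)
    (hq1 : r ^ 2 - 1 = e1 * f1) (hq2 : r ^ 2 - 1 = e2 * f2)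
    (hl : 2 ≤ l) (he1 : e1 % 2 ^ (l + 1) = 2 ^ l) (he2 : 2 ^ l ∣ e2)
    (hdvd1 : 2 * e2 ∣ e1 * (r - 1)) (hdvd2 : e1 ∣ e2 * (r + 1))
    (hs1 : 1 ≤ s) (hs2 : s ≤ e1 / Nat.gcd e1 e2)
    (ht1 : 1 ≤ t) (ht2 : t ≤ e2 / Nat.gcd e1 e2)
    (h4 : 4 ∣ (s - 1) * (r + 1))
    (hn1 : Odd (s * f1 + t * f2))
    (F : Type*) [Field F] [Fintype F] [DecidableEq F]
    (hF : Fintype.card F = r ^ 2) :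
    ∀ k : ℕ, 1 ≤ k → k ≤ (s * f1 + t * f2 + 1) / 2 - 1 →
      ∃ C : Submodule F (Fin (s * f1 + t * f2 + 1) → F),
        Module.finrank F C = k ∧
        C ≤ dualCode C ∧
        IsMinDist C (s * f1 + t * f2 + 1 - k + 1) := by
  intro k hk hkn
  exact mds_self_orthogonal_odd_length_succ_general hr_odd hq1 hq2 hl he1 he2 hdvd1 hdvd2 hs2 ht2 h4
    hF hk (by lia)
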